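/- arXiv:math/9307205 — 2 statements merged into one kernel-verified Lean document; each statement's English description precedes it below -/
import Mathlib

section
/- The continuous q-Hermite polynomials are orthogonal with respect to ρ: for m ≠ n, ∫_{-1}^{1} H_n(x|q)·H_m(x|q)·ρ(x) dx = 0, and ∫_{-1}^{1} H_n(x|q)² ρ(x) dx = 2π (q;q)_n / (q;q)_∞. -/
open scoped Real

/-- The continuous q-Hermite polynomials of Rogers. -/
noncomputable def qHermite (q : ℝ) : ℕ → Polynomial ℝ
  | 0 => 1
  | 1 => Polynomial.C 2 * Polynomial.X
  | (n + 2) => Polynomial.C 2 * Polynomial.X * qHermite q (n + 1)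
      - Polynomial.C (1 - q ^ (n + 1)) * qHermite q n

/-- The q-Hermite weight function. -/
noncomputable def qWeight (q x : ℝ) : ℝ :=
  4 * Real.sqrt (1 - x ^ 2) *
    ∏' j : ℕ, (1 - 2 * (2 * x ^ 2 - 1) * q ^ (j + 1) + q ^ (2 * (j + 1)))

/-- `(q;q)_n = ∏_{j=1}^n (1 - q^j)`. -/
noncomputable def qPochN (q : ℝ) (m : ℕ) : ℝ := ∏ j ∈ Finset.range m, (1 - q ^ (j + 1))

/-- `(q;q)_∞ = ∏_{j=1}^∞ (1 - q^j)`. -/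
noncomputable def qPochInf (q : ℝ) : ℝ := ∏' j : ℕ, (1 - q ^ (j + 1))


open Polynomial Filter Topology

/-- The theta coefficient `(-1)^k q^{k(k-1)/2}`. -/
noncomputable def thetaCoeff (q : ℝ) (k : ℤ) : ℝ := (-1) ^ k * √q ^ (k * (k - 1))

/-- `1 / (q;q)_k`, extended by zero to negative `k`. -/
noncomputable def qPochRecip (q : ℝ) (k : ℤ) : ℝ := if k < 0 then 0 else (qPochN q k.toNat)⁻¹

/-- The shifted factorial `(y;q)_n`. -/
noncomputable def qShift (q y : ℝ) (n : ℕ) : ℝ := ∏ i ∈ Finset.range n, (1 - y * q ^ i)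

lemma thetaCoeff_zero (q : ℝ) : thetaCoeff q 0 = 1 := by simp [thetaCoeff]

lemma thetaCoeff_add_one {q : ℝ} (hq : 0 < q) (k : ℤ) :
    thetaCoeff q (k + 1) = -(q ^ k * thetaCoeff q k) := by
  have hs : √q ≠ 0 := (Real.sqrt_pos.2 hq).ne'
  have h : q ^ k = √q ^ (2 * k) := by
    rw [zpow_mul]
    norm_cast
    rw [Real.sq_sqrt hq.le]
  rw [thetaCoeff, thetaCoeff, h, zpow_add₀ (by norm_num),
    show (k + 1) * (k + 1 - 1) = 2 * k + k * (k - 1) by ring, zpow_add₀ hs]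
  ring

lemma thetaCoeff_sub_one {q : ℝ} (hq : 0 < q) (k : ℤ) :
    thetaCoeff q (k - 1) = -(q / q ^ k * thetaCoeff q k) := by
  have h := thetaCoeff_add_one hq (k - 1)
  rw [sub_add_cancel, zpow_sub_one₀ hq.ne'] at h
  rw [h]
  have := zpow_ne_zero k hq.ne'
  field_simp

lemma thetaCoeff_neg {q : ℝ} (hq : 0 < q) (k : ℤ) :
    thetaCoeff q (-k) = q ^ k * thetaCoeff q k := by
  have hs : √q ≠ 0 := (Real.sqrt_pos.2 hq).ne'
  have h : q ^ k = √q ^ (2 * k) := by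
    rw [zpow_mul]
    norm_cast
    rw [Real.sq_sqrt hq.le]
  rw [thetaCoeff, thetaCoeff, h, zpow_neg, ← inv_zpow,
    show -k * (-k - 1) = 2 * k + k * (k - 1) by ring, zpow_add₀ hs]
  norm_num
  ring

lemma one_sub_pow_succ_pos {q : ℝ} (hq0 : 0 < q) (hq1 : q < 1) (j : ℕ) : 0 < 1 - q ^ (j + 1) :=
  sub_pos.2 (pow_lt_one₀ hq0.le hq1 j.succ_ne_zero)

lemma qPochN_pos {q : ℝ} (hq0 : 0 < q) (hq1 : q < 1) (n : ℕ) : 0 < qPochN q n :=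
  Finset.prod_pos fun j _ => one_sub_pow_succ_pos hq0 hq1 j

lemma qPochRecip_sub_one {q : ℝ} (hq0 : 0 < q) (hq1 : q < 1) (k : ℤ) :
    qPochRecip q (k - 1) = (1 - q ^ k) * qPochRecip q k := by
  rcases lt_trichotomy k 0 with h | rfl | h
  · simp [qPochRecip, h, show k - 1 < 0 by lia]
  · simp [qPochRecip]
  · obtain ⟨n, rfl⟩ : ∃ n : ℕ, k = n + 1 := ⟨(k - 1).toNat, by lia⟩
    have h1 : ((n : ℤ) + 1).toNat = n + 1 := by lia
    have h2 := one_sub_pow_succ_pos hq0 hq1 n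
    have h3 := qPochN_pos hq0 hq1 n
    have h4 : qPochN q (n + 1) = qPochN q n * (1 - q ^ (n + 1)) := Finset.prod_range_succ _ _
    have h5 : q ^ ((n : ℤ) + 1) = q ^ (n + 1) := by norm_cast
    rw [qPochRecip, qPochRecip, if_neg (by lia), if_neg (by lia), h1, h4, h5]
    simp only [add_sub_cancel_right, Int.toNat_natCast]
    field_simp

lemma qPochRecip_eq_add_one {q : ℝ} (hq0 : 0 < q) (hq1 : q < 1) (k : ℤ) :
    qPochRecip q k = (1 - q ^ (k + 1)) * qPochRecip q (k + 1) := by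
  rw [← qPochRecip_sub_one hq0 hq1, add_sub_cancel_right]

lemma qShift_succ (q y : ℝ) (n : ℕ) : qShift q y (n + 1) = qShift q y n * (1 - y * q ^ n) :=
  Finset.prod_range_succ _ _

lemma qShift_succ' (q y : ℝ) (n : ℕ) : qShift q y (n + 1) = (1 - y) * qShift q (y * q) n := by
  rw [qShift, Finset.prod_range_succ', qShift, mul_comm]
  simp [pow_succ', mul_assoc]

/-- The sum `∑ k, [n, k]_q (-1)^(J-k) q^((J-k)(J-k-1)/2)` in product form. -/
noncomputable def thetaShift (q : ℝ) (n : ℕ) (J : ℤ) : ℝ :=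
  thetaCoeff q J * qShift q (q ^ (1 - J)) n

lemma thetaShift_one {q : ℝ} (hq : 0 < q) (J : ℤ) :
    thetaShift q 1 J = thetaShift q 0 J + thetaShift q 0 (J - 1) := by
  have := zpow_ne_zero J hq.ne'
  simp only [thetaShift, qShift, thetaCoeff_sub_one hq, zpow_sub₀ hq.ne']
  simp
  ring

lemma thetaShift_add_two {q : ℝ} (hq : 0 < q) (n : ℕ) (J : ℤ) :
    thetaShift q (n + 2) J = thetaShift q (n + 1) J + thetaShift q (n + 1) (J - 1)
      - (1 - q ^ (n + 1)) * thetaShift q n (J - 1) := by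
  have h0 := zpow_ne_zero J hq.ne'
  have h1 : q ^ (1 - (J - 1)) = q ^ (1 - J) * q := by
    rw [← zpow_add_one₀ hq.ne']; ring_nf
  have h2 : thetaCoeff q (J - 1) = -(q ^ (1 - J) * thetaCoeff q J) := by
    rw [thetaCoeff_sub_one hq, zpow_sub₀ hq.ne', zpow_one]
  simp only [thetaShift, h1, h2]
  generalize q ^ (1 - J) = y
  rw [qShift_succ' q y (n + 1), qShift_succ' q y n, qShift_succ q (y * q) n]
  ring

lemma thetaShift_self {q : ℝ} (hq : 0 < q) {N : ℕ} (hN : N ≠ 0) :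
    thetaShift q (2 * N) N = 0 := by
  rw [thetaShift, qShift, Finset.prod_eq_zero (i := N - 1), mul_zero]
  · simp; lia
  · rw [← zpow_natCast, ← zpow_add₀ hq.ne', show 1 - (N : ℤ) + ((N - 1 : ℕ) : ℤ) = 0 by lia]
    simp

lemma two_mul_X_mul_qHermite (q : ℝ) (n : ℕ) :
    2 * X * qHermite q n = qHermite q (n + 1) + C (1 - q ^ n) * qHermite q (n - 1) := by
  cases n with
  | zero => simp [qHermite, C_ofNat]
  | succ n => simp [qHermite, C_ofNat]

lemma two_mul_X_mul_T (j : ℤ) :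
    2 * X * Chebyshev.T ℝ j = Chebyshev.T ℝ (j + 1) + Chebyshev.T ℝ (j - 1) := by
  rw [Chebyshev.T_add_one]; ring

section Functional

variable {q c : ℝ} {L : ℝ[X] →ₗ[ℝ] ℝ}

lemma map_C_mul (L : ℝ[X] →ₗ[ℝ] ℝ) (a : ℝ) (p : ℝ[X]) : L (C a * p) = a * L p := by
  rw [← smul_eq_C_mul, map_smul, smul_eq_mul]

lemma map_qHermite_add_two_mul_T (q : ℝ) (L : ℝ[X] →ₗ[ℝ] ℝ) (n : ℕ) (j : ℤ) :
    L (qHermite q (n + 2) * Chebyshev.T ℝ j) = L (qHermite q (n + 1) * Chebyshev.T ℝ (j + 1))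
      + L (qHermite q (n + 1) * Chebyshev.T ℝ (j - 1))
      - (1 - q ^ (n + 1)) * L (qHermite q n * Chebyshev.T ℝ j) := by
  have h : qHermite q (n + 2) * Chebyshev.T ℝ j = qHermite q (n + 1) * Chebyshev.T ℝ (j + 1)
      + qHermite q (n + 1) * Chebyshev.T ℝ (j - 1)
      - C (1 - q ^ (n + 1)) * (qHermite q n * Chebyshev.T ℝ j) := by
    rw [← mul_add, ← two_mul_X_mul_T, qHermite, C_ofNat]
    ring
  rw [h, map_sub, map_add, map_C_mul]

lemma map_qHermite_one_mul_T (q : ℝ) (L : ℝ[X] →ₗ[ℝ] ℝ) (j : ℤ) :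
    L (qHermite q 1 * Chebyshev.T ℝ j) = L (qHermite q 0 * Chebyshev.T ℝ (j + 1))
      + L (qHermite q 0 * Chebyshev.T ℝ (j - 1)) := by
  rw [← map_add, ← mul_add, ← two_mul_X_mul_T, qHermite, qHermite, C_ofNat, one_mul]

lemma map_qHermite_mul_T_odd (hodd : ∀ k : ℤ, L (Chebyshev.T ℝ (2 * k + 1)) = 0) (n : ℕ) (J : ℤ) :
    L (qHermite q n * Chebyshev.T ℝ (2 * J + 1 - n)) = 0 := by
  induction n using Nat.twoStepInduction generalizing J with
  | zero => simpa [qHermite] using hodd J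
  | one =>
    rw [map_qHermite_one_mul_T]
    have h1 := hodd J
    have h2 := hodd (J - 1)
    simp only [qHermite, one_mul]
    convert congrArg₂ (· + ·) h1 h2 using 4 <;> (push_cast; ring_nf)
  | more n ih0 ih1 =>
    have h0 := ih0 (J - 1)
    have h1 := ih1 J
    have h2 := ih1 (J - 1)
    rw [map_qHermite_add_two_mul_T]
    rw [show 2 * J + 1 - ((n + 2 : ℕ) : ℤ) + 1 = 2 * J + 1 - ((n + 1 : ℕ) : ℤ) by lia,
      show 2 * J + 1 - ((n + 2 : ℕ) : ℤ) - 1 = 2 * (J - 1) + 1 - ((n + 1 : ℕ) : ℤ) by lia,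
      show 2 * J + 1 - ((n + 2 : ℕ) : ℤ) = 2 * (J - 1) + 1 - (n : ℤ) by lia, h0, h1, h2]
    ring

lemma map_qHermite_mul_T_even (hq : 0 < q)
    (heven : ∀ k : ℤ, L (Chebyshev.T ℝ (2 * k)) = c * (thetaCoeff q k * (1 + q ^ k)))
    (n : ℕ) (J : ℤ) :
    L (qHermite q n * Chebyshev.T ℝ (2 * J - n)) =
      c * (thetaShift q n J + thetaShift q n (n - J)) := by
  have hz (J : ℤ) : L (qHermite q 0 * Chebyshev.T ℝ (2 * J)) =
      c * (thetaShift q 0 J + thetaShift q 0 (-J)) := by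
    simp only [qHermite, one_mul, heven, thetaShift, qShift, thetaCoeff_neg hq, Finset.range_zero,
      Finset.prod_empty]
    ring
  induction n using Nat.twoStepInduction generalizing J with
  | zero => simpa using hz J
  | one =>
    rw [map_qHermite_one_mul_T, show 2 * J - ((1 : ℕ) : ℤ) + 1 = 2 * J by lia,
      show 2 * J - ((1 : ℕ) : ℤ) - 1 = 2 * (J - 1) by lia, hz, hz, thetaShift_one hq,
      thetaShift_one hq, show ((1 : ℕ) : ℤ) - J - 1 = -J by lia,
      show ((1 : ℕ) : ℤ) - J = -(J - 1) by lia]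
    ring
  | more n ih0 ih1 =>
    rw [map_qHermite_add_two_mul_T,
      show 2 * J - ((n + 2 : ℕ) : ℤ) + 1 = 2 * J - ((n + 1 : ℕ) : ℤ) by lia,
      show 2 * J - ((n + 2 : ℕ) : ℤ) - 1 = 2 * (J - 1) - ((n + 1 : ℕ) : ℤ) by lia,
      show 2 * J - ((n + 2 : ℕ) : ℤ) = 2 * (J - 1) - (n : ℤ) by lia, ih0, ih1, ih1,
      thetaShift_add_two hq, thetaShift_add_two hq,
      show ((n + 2 : ℕ) : ℤ) - J - 1 = ((n + 1 : ℕ) : ℤ) - J by lia,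
      show ((n + 1 : ℕ) : ℤ) - (J - 1) = ((n + 2 : ℕ) : ℤ) - J by lia,
      show (n : ℤ) - (J - 1) = ((n + 1 : ℕ) : ℤ) - J by lia]
    ring

lemma map_qHermite_eq_zero (hq : 0 < q)
    (hodd : ∀ k : ℤ, L (Chebyshev.T ℝ (2 * k + 1)) = 0)
    (heven : ∀ k : ℤ, L (Chebyshev.T ℝ (2 * k)) = c * (thetaCoeff q k * (1 + q ^ k)))
    {n : ℕ} (hn : n ≠ 0) : L (qHermite q n) = 0 := by
  obtain ⟨N, rfl | rfl⟩ := n.even_or_odd'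
  · have h := map_qHermite_mul_T_even hq heven (2 * N) N
    rw [show ((2 * N : ℕ) : ℤ) - N = N by lia, thetaShift_self hq (by lia)] at h
    simpa using h
  · simpa using map_qHermite_mul_T_odd (q := q) hodd (2 * N + 1) N

lemma map_qHermite_mul_qHermite (hL : ∀ n, n ≠ 0 → L (qHermite q n) = 0) (n m : ℕ) :
    L (qHermite q n * qHermite q m) = if n = m then L 1 * qPochN q n else 0 := by
  induction n using Nat.strong_induction_on generalizing m with
  | _ n ih =>
  cases n with
  | zero =>
    by_cases hm : m = 0
    · simp [hm, qHermite, qPochN]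
    · simp [qHermite, hL m hm, Ne.symm hm]
  | succ n =>
    have key : L (qHermite q (n + 1) * qHermite q m)
        + (1 - q ^ n) * L (qHermite q (n - 1) * qHermite q m)
        = L (qHermite q n * qHermite q (m + 1))
        + (1 - q ^ m) * L (qHermite q n * qHermite q (m - 1)) := by
      rw [← map_C_mul, ← map_C_mul, ← map_add, ← map_add]
      congr 1
      linear_combination (-qHermite q m) * two_mul_X_mul_qHermite q n
        + qHermite q n * two_mul_X_mul_qHermite q m
    rw [ih n (by lia), ih n (by lia), ih (n - 1) (by lia)] at key
    have hs (k : ℕ) : qPochN q (k + 1) = qPochN q k * (1 - q ^ (k + 1)) :=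
      Finset.prod_range_succ _ _
    rw [eq_sub_of_add_eq key]
    by_cases h1 : m = n + 1
    · subst h1
      simp [hs, show n - 1 ≠ n + 1 by lia, show n ≠ n + 1 + 1 by lia]
      ring
    by_cases h2 : n = m + 1
    · subst h2
      simp [hs, show m + 1 ≠ m - 1 by lia, show m + 1 + 1 ≠ m by lia]
      ring
    have e1 : (1 - q ^ n) * (if n - 1 = m then L 1 * qPochN q (n - 1) else 0) = 0 := by
      rcases eq_or_ne n 0 with rfl | h
      · simp
      · simp [show n - 1 ≠ m by lia]
    have e2 : (1 - q ^ m) * (if n = m - 1 then L 1 * qPochN q n else 0) = 0 := by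
      rcases eq_or_ne m 0 with rfl | h
      · simp
      · simp [show n ≠ m - 1 by lia]
    rw [e1, e2, if_neg h2, if_neg (Ne.symm h1)]
    ring

end Functional
/-- The moment functional of the truncated weight in the variable `x = cos θ`. -/
noncomputable def truncMoment (q : ℝ) (M : ℕ) : ℝ[X] →ₗ[ℝ] ℝ where
  toFun f := ∫ θ in (0 : ℝ)..π, f.eval (Real.cos θ) *
    ∏ i ∈ Finset.range M, (1 - 2 * (2 * Real.cos θ ^ 2 - 1) * q ^ i + q ^ (2 * i))
  map_add' f g := by
    simp only [eval_add, add_mul]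
    exact intervalIntegral.integral_add (Continuous.intervalIntegrable (by fun_prop) _ _)
      (Continuous.intervalIntegrable (by fun_prop) _ _)
  map_smul' a f := by simp [mul_assoc]

lemma truncMoment_succ (q : ℝ) (M : ℕ) (f : ℝ[X]) :
    truncMoment q (M + 1) f =
      truncMoment q M (C (1 + q ^ (2 * M)) * f - C (q ^ M) * (2 * (2 * X ^ 2 - 1) * f)) := by
  simp only [truncMoment, LinearMap.coe_mk, AddHom.coe_mk]
  congr 1 with θ
  rw [Finset.prod_range_succ]
  simp
  ring

lemma two_mul_two_mul_X_sq_sub_one_mul_T (j : ℤ) :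
    2 * (2 * X ^ 2 - 1) * Chebyshev.T ℝ j =
      Chebyshev.T ℝ (j + 2) + Chebyshev.T ℝ (j - 2) := by
  rw [Chebyshev.T_add_two, Chebyshev.T_sub_two, Chebyshev.T_add_one, Chebyshev.T_sub_one,
    Chebyshev.T_add_one]
  ring

lemma truncMoment_succ_T (q : ℝ) (M : ℕ) (j : ℤ) :
    truncMoment q (M + 1) (Chebyshev.T ℝ j) =
      (1 + q ^ (2 * M)) * truncMoment q M (Chebyshev.T ℝ j)
        - q ^ M * (truncMoment q M (Chebyshev.T ℝ (j + 2))
          + truncMoment q M (Chebyshev.T ℝ (j - 2))) := by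
  rw [truncMoment_succ, two_mul_two_mul_X_sq_sub_one_mul_T, map_sub, map_C_mul, map_C_mul, map_add]

lemma truncMoment_zero_T (q : ℝ) (j : ℤ) :
    truncMoment q 0 (Chebyshev.T ℝ j) = if j = 0 then π else 0 := by
  simp only [truncMoment, LinearMap.coe_mk, AddHom.coe_mk, Chebyshev.T_real_cos]
  split_ifs with h
  · simp [h]
  · have hj : (j : ℝ) ≠ 0 := by exact_mod_cast h
    simp [intervalIntegral.integral_comp_mul_left (fun x => Real.cos x) hj]

lemma truncMoment_T_odd (q : ℝ) (M : ℕ) (k : ℤ) :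
    truncMoment q M (Chebyshev.T ℝ (2 * k + 1)) = 0 := by
  induction M generalizing k with
  | zero => rw [truncMoment_zero_T, if_neg (by lia)]
  | succ M ih =>
    rw [truncMoment_succ_T, show 2 * k + 1 + 2 = 2 * (k + 1) + 1 by ring,
      show 2 * k + 1 - 2 = 2 * (k - 1) + 1 by ring, ih, ih, ih]
    ring

lemma truncMoment_T_even {q : ℝ} (hq0 : 0 < q) (hq1 : q < 1) (M : ℕ) (k : ℤ) :
    truncMoment q M (Chebyshev.T ℝ (2 * k)) =
      π * (thetaCoeff q k * (1 + q ^ k)) *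
        (qPochN q (2 * M) / (1 + q ^ M) * (qPochRecip q (M + k) * qPochRecip q (M - k))) := by
  induction M generalizing k with
  | zero =>
    rw [truncMoment_zero_T]
    rcases lt_trichotomy k 0 with h | rfl | h
    · simp [h.ne, qPochRecip, h]
    · simp [thetaCoeff_zero, qPochRecip, qPochN]
    · simp [h.ne', qPochRecip, h]
  | succ M ih =>
    have hq := hq0.ne'
    have hs (k : ℕ) : qPochN q (k + 1) = qPochN q k * (1 - q ^ (k + 1)) :=
      Finset.prod_range_succ _ _
    have hp : (1 : ℝ) + q ^ M ≠ 0 := by positivity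
    have hp' : (1 : ℝ) + q ^ M * q ≠ 0 := by positivity
    have hu : q ^ k ≠ 0 := zpow_ne_zero k hq
    rw [truncMoment_succ_T, show 2 * k + 2 = 2 * (k + 1) by ring,
      show 2 * k - 2 = 2 * (k - 1) by ring, ih, ih, ih, thetaCoeff_add_one hq0,
      thetaCoeff_sub_one hq0]
    rw [show 2 * (M + 1) = 2 * M + 1 + 1 by ring, hs, hs]
    have a1 : qPochRecip q (M + k) =
        (1 - q ^ M * q ^ k * q) * qPochRecip q ((M + 1 : ℕ) + k) := by
      rw [qPochRecip_eq_add_one hq0 hq1, zpow_add_one₀ hq, zpow_add₀ hq, zpow_natCast]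
      congr 2; push_cast; ring
    have a2 : qPochRecip q (M - k) =
        (1 - q ^ M / q ^ k * q) * qPochRecip q ((M + 1 : ℕ) - k) := by
      rw [qPochRecip_eq_add_one hq0 hq1, zpow_add_one₀ hq, zpow_sub₀ hq, zpow_natCast]
      congr 2; push_cast; ring
    have a3 : qPochRecip q (M + (k - 1)) = (1 - q ^ M * q ^ k) * qPochRecip q (M + k) := by
      rw [← add_sub_assoc, qPochRecip_sub_one hq0 hq1, zpow_add₀ hq, zpow_natCast]
    have a4 : qPochRecip q (M - (k + 1)) = (1 - q ^ M / q ^ k) * qPochRecip q (M - k) := by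
      rw [← sub_sub, qPochRecip_sub_one hq0 hq1, zpow_sub₀ hq, zpow_natCast]
    have a5 : (M : ℤ) + (k + 1) = (M + 1 : ℕ) + k := by push_cast; ring
    have a6 : (M : ℤ) - (k - 1) = (M + 1 : ℕ) - k := by push_cast; ring
    rw [a3, a4, a5, a6, a1, a2, zpow_add_one₀ hq, zpow_sub_one₀ hq]
    generalize qPochRecip q ((M + 1 : ℕ) + k) = r
    generalize qPochRecip q ((M + 1 : ℕ) - k) = r'
    simp only [pow_succ, pow_mul']
    simp only [pow_zero, one_mul]
    generalize q ^ M = p at *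
    generalize q ^ k = u at *
    field_simp
    ring

lemma summable_pow_succ {q : ℝ} (hq0 : 0 < q) (hq1 : q < 1) :
    Summable fun j : ℕ => q ^ (j + 1) :=
  (summable_nat_add_iff 1).2 (summable_geometric_of_lt_one hq0.le hq1)

lemma tendsto_qPochN {q : ℝ} (hq0 : 0 < q) (hq1 : q < 1) :
    Tendsto (qPochN q) atTop (𝓝 (qPochInf q)) := by
  have h : Multipliable fun j : ℕ => 1 + -q ^ (j + 1) :=
    Real.multipliable_one_add_of_summable (summable_pow_succ hq0 hq1).neg
  exact h.hasProd.tendsto_prod_nat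

lemma qPochInf_ne_zero {q : ℝ} (hq0 : 0 < q) (hq1 : q < 1) : qPochInf q ≠ 0 :=
  tprod_one_add_ne_zero_of_summable (f := fun j : ℕ => -q ^ (j + 1))
    (fun j => (one_sub_pow_succ_pos hq0 hq1 j).ne') (summable_pow_succ hq0 hq1).neg.norm

lemma tendsto_qPochRecip {q : ℝ} (hq0 : 0 < q) (hq1 : q < 1) :
    Tendsto (qPochRecip q) atTop (𝓝 (qPochInf q)⁻¹) := by
  have h1 : Tendsto Int.toNat atTop atTop :=
    tendsto_atTop.2 fun b => (eventually_ge_atTop (b : ℤ)).mono fun k hk => by lia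
  refine (((tendsto_qPochN hq0 hq1).comp h1).inv₀ (qPochInf_ne_zero hq0 hq1)).congr' ?_
  filter_upwards [eventually_ge_atTop 0] with k hk
  simp [qPochRecip, hk.not_gt]

lemma tendsto_truncMoment_T_even {q : ℝ} (hq0 : 0 < q) (hq1 : q < 1) (k : ℤ) :
    Tendsto (fun M => truncMoment q (M + 1) (Chebyshev.T ℝ (2 * k))) atTop
      (𝓝 (π / qPochInf q * (thetaCoeff q k * (1 + q ^ k)))) := by
  have h0 := qPochInf_ne_zero hq0 hq1
  have hp : Tendsto (fun M : ℕ => 1 + q ^ M) atTop (𝓝 (1 + 0)) :=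
    (tendsto_pow_atTop_nhds_zero_of_lt_one hq0.le hq1).const_add 1
  have h1 : Tendsto (fun M : ℕ => qPochN q (2 * M)) atTop (𝓝 (qPochInf q)) :=
    (tendsto_qPochN hq0 hq1).comp (tendsto_id.const_mul_atTop' two_pos)
  have h2 : Tendsto (fun M : ℕ => qPochRecip q (M + k)) atTop (𝓝 (qPochInf q)⁻¹) :=
    (tendsto_qPochRecip hq0 hq1).comp
      (tendsto_atTop_add_const_right _ k tendsto_natCast_atTop_atTop)
  have h3 : Tendsto (fun M : ℕ => qPochRecip q (M - k)) atTop (𝓝 (qPochInf q)⁻¹) :=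
    (tendsto_qPochRecip hq0 hq1).comp
      (tendsto_atTop_add_const_right _ (-k) tendsto_natCast_atTop_atTop)
  have h := (((h1.div hp (by norm_num)).mul (h2.mul h3)).const_mul
    (π * (thetaCoeff q k * (1 + q ^ k)))).comp (tendsto_add_atTop_nat 1)
  convert h using 1
  · ext M
    exact truncMoment_T_even hq0 hq1 (M + 1) k
  · congr 1
    field_simp
    ring

lemma truncMoment_eq_integral (q : ℝ) (M : ℕ) (f : ℝ[X]) :
    truncMoment q (M + 1) f = ∫ x in (-1 : ℝ)..1, f.eval x * (4 * √(1 - x ^ 2) *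
      ∏ j ∈ Finset.range M, (1 - 2 * (2 * x ^ 2 - 1) * q ^ (j + 1) + q ^ (2 * (j + 1)))) := by
  have h := intervalIntegral.integral_comp_mul_deriv (a := 0) (b := π) (f := Real.cos)
    (f' := fun x => -Real.sin x) (g := fun x => f.eval x * (4 * √(1 - x ^ 2) *
      ∏ j ∈ Finset.range M, (1 - 2 * (2 * x ^ 2 - 1) * q ^ (j + 1) + q ^ (2 * (j + 1)))))
    (fun x _ => Real.hasDerivAt_cos x) (by fun_prop) (by fun_prop)
  rw [Real.cos_zero, Real.cos_pi, intervalIntegral.integral_symm (-1) 1, ← neg_eq_iff_eq_neg] at h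
  rw [← h, ← intervalIntegral.integral_neg]
  refine intervalIntegral.integral_congr fun θ hθ => ?_
  rw [Set.uIcc_of_le Real.pi_pos.le] at hθ
  have hs : √(1 - Real.cos θ ^ 2) = Real.sin θ := by
    rw [← Real.sin_sq, Real.sqrt_sq (Real.sin_nonneg_of_mem_Icc hθ)]
  simp only [Function.comp, hs]
  rw [Finset.prod_range_succ']
  linear_combination (4 * f.eval (Real.cos θ) * ∏ j ∈ Finset.range M,
    (1 - 2 * (2 * Real.cos θ ^ 2 - 1) * q ^ (j + 1) + q ^ (2 * (j + 1)))) *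
      (-Real.sin_sq_add_cos_sq θ)

lemma abs_weightFactor_le {q x : ℝ} (hq0 : 0 < q) (hq1 : q < 1) (hx : x ∈ Set.Icc (-1 : ℝ) 1)
    (j : ℕ) : |-2 * (2 * x ^ 2 - 1) * q ^ j + q ^ (2 * j)| ≤ 3 * q ^ j := by
  have hx2 : x ^ 2 ≤ 1 := by nlinarith [hx.1, hx.2]
  have h0 : 0 < q ^ j := pow_pos hq0 j
  have h1 : q ^ j ≤ 1 := pow_le_one₀ hq0.le hq1.le
  rw [pow_mul']
  generalize q ^ j = p at *
  rw [abs_le]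
  constructor <;> nlinarith [mul_nonneg h0.le (sq_nonneg x), mul_nonneg h0.le (sub_nonneg.2 hx2)]

lemma tendsto_weightProd {q x : ℝ} (hq0 : 0 < q) (hq1 : q < 1) (hx : x ∈ Set.Icc (-1 : ℝ) 1) :
    Tendsto (fun M => ∏ j ∈ Finset.range M,
        (1 - 2 * (2 * x ^ 2 - 1) * q ^ (j + 1) + q ^ (2 * (j + 1)))) atTop
      (𝓝 (∏' j : ℕ, (1 - 2 * (2 * x ^ 2 - 1) * q ^ (j + 1) + q ^ (2 * (j + 1))))) := by
  have h : Multipliable fun j : ℕ =>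
      1 + (-2 * (2 * x ^ 2 - 1) * q ^ (j + 1) + q ^ (2 * (j + 1))) :=
    Real.multipliable_one_add_of_summable <| .of_norm_bounded
      ((summable_pow_succ hq0 hq1).mul_left 3) fun j => abs_weightFactor_le hq0 hq1 hx (j + 1)
  convert h.hasProd.tendsto_prod_nat using 1
  · ext M
    exact Finset.prod_congr rfl fun j _ => by ring
  · congr 1
    exact tprod_congr fun j => by ring

lemma abs_weightProd_le {q x : ℝ} (hq0 : 0 < q) (hq1 : q < 1) (hx : x ∈ Set.Icc (-1 : ℝ) 1)
    (M : ℕ) : |∏ j ∈ Finset.range M,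
      (1 - 2 * (2 * x ^ 2 - 1) * q ^ (j + 1) + q ^ (2 * (j + 1)))|
        ≤ Real.exp (∑' j : ℕ, 3 * q ^ (j + 1)) := by
  have hs := (summable_pow_succ hq0 hq1).mul_left 3
  calc _ = ∏ j ∈ Finset.range M, |1 - 2 * (2 * x ^ 2 - 1) * q ^ (j + 1) + q ^ (2 * (j + 1))| :=
        Finset.abs_prod _ _
    _ ≤ ∏ j ∈ Finset.range M, Real.exp (3 * q ^ (j + 1)) := by
        refine Finset.prod_le_prod (fun _ _ => abs_nonneg _) fun j _ => ?_
        refine le_trans ?_ (Real.add_one_le_exp _)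
        have h := abs_add_le 1 (-2 * (2 * x ^ 2 - 1) * q ^ (j + 1) + q ^ (2 * (j + 1)))
        rw [abs_one] at h
        rw [show 1 - 2 * (2 * x ^ 2 - 1) * q ^ (j + 1) + q ^ (2 * (j + 1)) =
          1 + (-2 * (2 * x ^ 2 - 1) * q ^ (j + 1) + q ^ (2 * (j + 1))) by ring]
        linarith [abs_weightFactor_le hq0 hq1 hx (j + 1)]
    _ = Real.exp (∑ j ∈ Finset.range M, 3 * q ^ (j + 1)) := (Real.exp_sum _ _).symm
    _ ≤ _ := Real.exp_le_exp.2 (hs.sum_le_tsum _ fun j _ => by positivity)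

lemma tendsto_truncMoment {q : ℝ} (hq0 : 0 < q) (hq1 : q < 1) (f : ℝ[X]) :
    Tendsto (fun M => truncMoment q (M + 1) f) atTop
      (𝓝 (∫ x in (-1 : ℝ)..1, f.eval x * qWeight q x)) := by
  simp only [truncMoment_eq_integral]
  have hmem {x : ℝ} (hx : x ∈ Set.uIoc (-1 : ℝ) 1) : x ∈ Set.Icc (-1 : ℝ) 1 := by
    rw [Set.uIoc_of_le (by norm_num)] at hx
    exact Set.Ioc_subset_Icc_self hx
  refine intervalIntegral.tendsto_integral_filter_of_dominated_convergence
    (fun x => |f.eval x| * (4 * √(1 - x ^ 2) * Real.exp (∑' j : ℕ, 3 * q ^ (j + 1)))) ?_ ?_ ?_ ?_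
  · exact .of_forall fun M => Continuous.aestronglyMeasurable (by fun_prop)
  · refine .of_forall fun M => .of_forall fun x hx => ?_
    rw [Real.norm_eq_abs, abs_mul, abs_mul, abs_of_nonneg (by positivity : 0 ≤ 4 * √(1 - x ^ 2))]
    gcongr
    exact abs_weightProd_le hq0 hq1 (hmem hx) M
  · exact Continuous.intervalIntegrable (by fun_prop) _ _
  · exact .of_forall fun x hx =>
      ((tendsto_weightProd hq0 hq1 (hmem hx)).const_mul _).const_mul _

/-- The moment functional of the q-Hermite weight. -/
noncomputable def qMoment {q : ℝ} (hq0 : 0 < q) (hq1 : q < 1) : ℝ[X] →ₗ[ℝ] ℝ :=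
  linearMapOfTendsto (fun f => ∫ x in (-1 : ℝ)..1, f.eval x * qWeight q x)
    (fun M : ℕ => truncMoment q (M + 1)) (tendsto_pi_nhds.2 (tendsto_truncMoment hq0 hq1))

lemma qMoment_apply {q : ℝ} (hq0 : 0 < q) (hq1 : q < 1) (f : ℝ[X]) :
    qMoment hq0 hq1 f = ∫ x in (-1 : ℝ)..1, f.eval x * qWeight q x := rfl

lemma qMoment_T_odd {q : ℝ} (hq0 : 0 < q) (hq1 : q < 1) (k : ℤ) :
    qMoment hq0 hq1 (Chebyshev.T ℝ (2 * k + 1)) = 0 :=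
  tendsto_nhds_unique (tendsto_truncMoment hq0 hq1 _) (by simp [truncMoment_T_odd])

lemma qMoment_T_even {q : ℝ} (hq0 : 0 < q) (hq1 : q < 1) (k : ℤ) :
    qMoment hq0 hq1 (Chebyshev.T ℝ (2 * k)) =
      π / qPochInf q * (thetaCoeff q k * (1 + q ^ k)) :=
  tendsto_nhds_unique (tendsto_truncMoment hq0 hq1 _) (tendsto_truncMoment_T_even hq0 hq1 k)

lemma integral_qHermite_mul_qHermite {q : ℝ} (hq0 : 0 < q) (hq1 : q < 1) (n m : ℕ) :
    ∫ x in (-1 : ℝ)..1, (qHermite q n).eval x * (qHermite q m).eval x * qWeight q x =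
      if n = m then 2 * π * qPochN q n / qPochInf q else 0 := by
  have h1 : qMoment hq0 hq1 1 = 2 * π / qPochInf q := by
    have h := qMoment_T_even hq0 hq1 0
    rw [mul_zero, Chebyshev.T_zero] at h
    rw [h, thetaCoeff_zero, zpow_zero]
    ring
  have h := map_qHermite_mul_qHermite (L := qMoment hq0 hq1) (fun n hn => map_qHermite_eq_zero hq0
    (qMoment_T_odd hq0 hq1) (qMoment_T_even hq0 hq1) hn) n m
  rw [qMoment_apply, h1] at h
  simp only [eval_mul] at h
  rw [h, div_mul_eq_mul_div]

theorem qHermite_orthogonality (q : ℝ) (hq0 : 0 < q) (hq1 : q < 1) (n m : ℕ) :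
    (m ≠ n →
      ∫ x in (-1 : ℝ)..1,
        (qHermite q n).eval x * (qHermite q m).eval x * qWeight q x = 0) ∧
    ∫ x in (-1 : ℝ)..1,
      ((qHermite q n).eval x) ^ 2 * qWeight q x = 2 * π * qPochN q n / qPochInf q := by
  refine ⟨fun h => ?_, ?_⟩
  · rw [integral_qHermite_mul_qHermite hq0 hq1, if_neg h.symm]
  · simpa [sq] using integral_qHermite_mul_qHermite hq0 hq1 n n
end

section
/- (Eigenvalue equation for the momentum operator on the t-kernel) With P acting on the basis by P ψ_n = (√(1-q)/(2i))(e_n^{1/2} ψ_{n-1} - e_{n+1}^{1/2} ψ_{n+1}), the kernel K_t(x,y;q) = α^{-2}Σ_{n} t^n ψ_n(x)ψ_n(y) satisfies P_x K_t(x,y;q) = [2ty - (1+t²)x]/(i(1-t²)) · K_t(x,y;q); in particular for t = i, P_x K_i(x,y;q) = y·K_i(x,y;q). -/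
open scoped Real

/-- The infinite q-Pochhammer symbol `(a;q)_∞ = ∏_{k=0}^∞ (1 - a q^k)`. -/
noncomputable def qPochInfA (a q : ℝ) : ℝ := ∏' k : ℕ, (1 - a * q ^ k)

/-- The q-wave functions `ψ_n(x) = α d_n⁻¹ ρ(x)^{1/2} H_n(x|q)`, where
`α = ((1-q)/2)^{1/4}` and `d_n⁻¹ = ((q^{n+1};q)_∞ / (2π))^{1/2}`. -/
noncomputable def qWave (q : ℝ) (n : ℕ) (x : ℝ) : ℝ :=
  ((1 - q) / 2) ^ ((1 : ℝ) / 4) * Real.sqrt (qPochInfA (q ^ (n + 1)) q / (2 * π)) *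
    Real.sqrt (qWeight q x) * (qHermite q n).eval x

/-- The q-Poisson kernel `K_t(x,y;q) = α⁻² Σ_{n=0}^∞ tⁿ ψ_n(x) ψ_n(y)`,
with `α⁻² = ((1-q)/2)^{-1/2}`. -/
noncomputable def qKernel (q : ℝ) (t : ℂ) (x y : ℝ) : ℂ :=
  (Real.sqrt (2 / (1 - q)) : ℂ) *
    ∑' n : ℕ, t ^ n * (qWave q n x : ℂ) * (qWave q n y : ℂ)

/-- `e_n = (1 - qⁿ)/(1 - q)`. -/
noncomputable def qE (q : ℝ) (n : ℕ) : ℝ := (1 - q ^ n) / (1 - q)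

lemma multipliable_qPochInfA (a : ℝ) {q : ℝ} (hq0 : 0 < q) (hq1 : q < 1) :
    Multipliable fun k : ℕ => 1 - a * q ^ k := by
  simpa [sub_eq_add_neg] using Real.multipliable_one_add_of_summable
    ((summable_geometric_of_lt_one hq0.le hq1).mul_left a).neg

lemma qPochInfA_eq_mul (a : ℝ) {q : ℝ} (hq0 : 0 < q) (hq1 : q < 1) :
    qPochInfA a q = (1 - a) * qPochInfA (a * q) q := by
  have hs : (fun k : ℕ => 1 - a * q ^ (k + 1)) = fun k : ℕ => 1 - a * q * q ^ k := by
    funext k; ring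
  have h := tprod_eq_zero_mul' (f := fun k : ℕ => 1 - a * q ^ k)
    (by rw [hs]; exact multipliable_qPochInfA (a * q) hq0 hq1)
  rw [hs] at h
  simpa [qPochInfA] using h

lemma qPochInfA_le_one {a q : ℝ} (ha0 : 0 ≤ a) (ha1 : a ≤ 1) (hq0 : 0 < q) (hq1 : q < 1) :
    qPochInfA a q ≤ 1 := by
  refine le_of_tendsto' (multipliable_qPochInfA a hq0 hq1).hasProd.tendsto_prod_nat fun n => ?_
  refine Finset.prod_le_one (fun k _ => ?_) fun k _ => ?_
  · exact sub_nonneg.2 (mul_le_one₀ ha1 (by positivity) (pow_le_one₀ hq0.le hq1.le))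
  · exact sub_le_self _ (by positivity)

lemma sqrt_qPochInfA_succ {q : ℝ} (hq0 : 0 < q) (hq1 : q < 1) (n : ℕ) :
    √(qPochInfA (q ^ (n + 1)) q / (2 * π)) =
      √(1 - q ^ (n + 1)) * √(qPochInfA (q ^ (n + 2)) q / (2 * π)) := by
  rw [qPochInfA_eq_mul _ hq0 hq1, ← pow_succ, mul_div_assoc,
    Real.sqrt_mul (sub_nonneg.2 (pow_le_one₀ hq0.le hq1.le))]

lemma qHermite_eval_succ_succ (q : ℝ) (n : ℕ) (x : ℝ) :
    (qHermite q (n + 2)).eval x =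
      2 * x * (qHermite q (n + 1)).eval x - (1 - q ^ (n + 1)) * (qHermite q n).eval x := by
  simp [qHermite]

lemma sqrt_qE_mul_qWave_succ {q : ℝ} (hq0 : 0 < q) (hq1 : q < 1) (n : ℕ) (x : ℝ) :
    √(qE q (n + 1)) * qWave q (n + 1) x =
      (√(1 - q))⁻¹ * (((1 - q) / 2) ^ ((1 : ℝ) / 4) * √(qPochInfA (q ^ (n + 1)) q / (2 * π)) *
        √(qWeight q x) * (qHermite q (n + 1)).eval x) := by
  rw [qWave, sqrt_qPochInfA_succ hq0 hq1 n, qE, Real.sqrt_div' _ (sub_nonneg.2 hq1.le)]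
  ring

lemma sqrt_qE_mul_qWave {q : ℝ} (hq0 : 0 < q) (hq1 : q < 1) (n : ℕ) (x : ℝ) :
    √(qE q (n + 1)) * qWave q n x =
      (√(1 - q))⁻¹ * (((1 - q) / 2) ^ ((1 : ℝ) / 4) * √(qPochInfA (q ^ (n + 2)) q / (2 * π)) *
        √(qWeight q x) * ((1 - q ^ (n + 1)) * (qHermite q n).eval x)) := by
  rw [qWave, sqrt_qPochInfA_succ hq0 hq1 n, qE, Real.sqrt_div' _ (sub_nonneg.2 hq1.le)]
  have := Real.mul_self_sqrt (sub_nonneg.2 (pow_le_one₀ hq0.le hq1.le : q ^ (n + 1) ≤ 1))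
  generalize √(1 - q ^ (n + 1)) = r at *
  rw [← this]
  ring

/-- The three-term recurrence of the wave functions. -/
lemma qWave_recurrence {q : ℝ} (hq0 : 0 < q) (hq1 : q < 1) (n : ℕ) (x : ℝ) :
    √(qE q (n + 1)) * qWave q (n + 1) x + √(qE q n) * qWave q (n - 1) x =
      2 / √(1 - q) * x * qWave q n x := by
  rw [sqrt_qE_mul_qWave_succ hq0 hq1]
  cases n with
  | zero =>
    simp [qE, qWave, qHermite]
    ring
  | succ n =>
    rw [Nat.add_sub_cancel, sqrt_qE_mul_qWave hq0 hq1, qHermite_eval_succ_succ, qWave]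
    ring

lemma qWave_eq_zero {q x : ℝ} (hx : 1 - x ^ 2 ≤ 0) (n : ℕ) : qWave q n x = 0 := by
  simp [qWave, qWeight, Real.sqrt_eq_zero_of_nonpos hx]

/-- Inside `(-1, 1)`, consecutive q-Hermite polynomials are dominated by a sequence of
subexponential growth. -/
lemma exists_qHermite_majorant {q x : ℝ} (hq0 : 0 < q) (hx : 0 < 1 - x ^ 2) :
    ∃ (U : ℕ → ℝ) (D : ℝ), (∀ n, |(qHermite q n).eval x| ≤ U n) ∧
      (∀ n, |(qHermite q (n + 1)).eval x| ≤ U n) ∧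
      ∀ n, U (n + 1) ≤ (1 + D * q ^ (n + 1)) * U n := by
  set s := √(1 - x ^ 2) with hs
  have hs0 : 0 < s := Real.sqrt_pos.2 hx
  have hss : s ^ 2 = 1 - x ^ 2 := Real.sq_sqrt hx.le
  let z : ℂ := ⟨x, s⟩
  let w : ℂ := ⟨x, -s⟩
  have hz : ‖z‖ = 1 := by
    rw [Complex.norm_eq_sqrt_sq_add_sq, Real.sqrt_eq_one]; simp only [z]; linarith
  have hw : ‖w‖ = 1 := by
    rw [Complex.norm_eq_sqrt_sq_add_sq, Real.sqrt_eq_one]; simp only [w, neg_sq]; linarith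
  have hzw : z * w = 1 := by
    apply Complex.ext <;> simp [z, w] <;> nlinarith
  have hadd : z + w = 2 * x := by
    apply Complex.ext <;> simp [z, w]; ring
  let H : ℕ → ℝ := fun n => (qHermite q n).eval x
  let u : ℕ → ℂ := fun n => H (n + 1) - w * H n
  have hrec : ∀ n, u (n + 1) = z * u n + q ^ (n + 1) * H n := by
    intro n
    have h : (H (n + 2) : ℂ) = 2 * x * H (n + 1) - (1 - q ^ (n + 1)) * H n := by
      exact_mod_cast qHermite_eval_succ_succ q n x
    simp only [u, h, ← hadd]
    linear_combination (H n : ℂ) * hzw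
  have hH : ∀ n, |H n| ≤ s⁻¹ * ‖u n‖ := by
    intro n
    have h1 : (u n).im = s * H n := by simp [u, w]
    have h2 := Complex.abs_im_le_norm (u n)
    rw [h1, abs_mul, abs_of_pos hs0] at h2
    rwa [inv_mul_eq_div, le_div_iff₀' hs0]
  have hinv : 0 < s⁻¹ := inv_pos.2 hs0
  refine ⟨fun n => (1 + s⁻¹) * ‖u n‖, s⁻¹, fun n => ?_, fun n => ?_, fun n => ?_⟩
  · have := hH n
    have := norm_nonneg (u n)
    change |H n| ≤ _
    linarith
  · have h1 : (H (n + 1) : ℂ) = u n + w * H n := by simp [u]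
    have h2 : |H (n + 1)| ≤ ‖u n‖ + |H n| := by
      have := norm_add_le (u n) (w * H n)
      rw [← h1, norm_mul, hw, one_mul, Complex.norm_real, Complex.norm_real] at this
      exact this
    have := hH n
    change |H (n + 1)| ≤ _
    linarith
  · have h1 : ‖u (n + 1)‖ ≤ ‖u n‖ + q ^ (n + 1) * |H n| := by
      have := norm_add_le (z * u n) (q ^ (n + 1) * H n)
      rw [← hrec, norm_mul, hz, one_mul, norm_mul, norm_pow, Complex.norm_real, Complex.norm_real,
        Real.norm_eq_abs, Real.norm_eq_abs, abs_of_pos hq0] at this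
      exact this
    have h2 := mul_le_mul_of_nonneg_left (hH n) (pow_pos hq0 (n + 1)).le
    calc (1 + s⁻¹) * ‖u (n + 1)‖
        ≤ (1 + s⁻¹) * (‖u n‖ + q ^ (n + 1) * (s⁻¹ * ‖u n‖)) := by gcongr; linarith
      _ = _ := by ring

/-- On the whole line, consecutive wave functions are dominated by a sequence of
subexponential growth. -/
lemma exists_qWave_majorant {q : ℝ} (hq0 : 0 < q) (hq1 : q < 1) (x : ℝ) :
    ∃ (U : ℕ → ℝ) (D : ℝ), (∀ n, |qWave q n x| ≤ U n) ∧ (∀ n, |qWave q (n + 1) x| ≤ U n) ∧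
      ∀ n, U (n + 1) ≤ (1 + D * q ^ (n + 1)) * U n := by
  rcases le_or_gt (1 - x ^ 2) 0 with hx | hx
  · exact ⟨0, 0, by simp [qWave_eq_zero hx], by simp [qWave_eq_zero hx], by simp⟩
  obtain ⟨U, D, h0, h1, hD⟩ := exists_qHermite_majorant hq0 hx
  set C := ((1 - q) / 2) ^ ((1 : ℝ) / 4) * √(qWeight q x) with hC
  have hb : 0 ≤ ((1 - q) / 2) ^ ((1 : ℝ) / 4) := Real.rpow_nonneg (by linarith) _
  have hC0 : 0 ≤ C := mul_nonneg hb (Real.sqrt_nonneg _)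
  have key : ∀ n, |qWave q n x| ≤ C * |(qHermite q n).eval x| := by
    intro n
    have hc : √(qPochInfA (q ^ (n + 1)) q / (2 * π)) ≤ 1 := by
      rw [Real.sqrt_le_one, div_le_one (by positivity)]
      have := qPochInfA_le_one (pow_pos hq0 (n + 1)).le (pow_le_one₀ hq0.le hq1.le) hq0 hq1
      linarith [Real.pi_gt_three]
    have he : qWave q n x =
        √(qPochInfA (q ^ (n + 1)) q / (2 * π)) * (C * (qHermite q n).eval x) := by
      rw [qWave, hC]; ring
    rw [he, abs_mul, abs_mul, abs_of_nonneg (Real.sqrt_nonneg _), abs_of_nonneg hC0]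
    exact mul_le_of_le_one_left (by positivity) hc
  refine ⟨fun n => C * U n, D, fun n => ?_, fun n => ?_, fun n => ?_⟩
  · exact (key n).trans (mul_le_mul_of_nonneg_left (h0 n) hC0)
  · exact (key (n + 1)).trans (mul_le_mul_of_nonneg_left (h1 n) hC0)
  · calc C * U (n + 1) ≤ C * ((1 + D * q ^ (n + 1)) * U n) :=
          mul_le_mul_of_nonneg_left (hD n) hC0
      _ = _ := by ring

lemma summable_pow_mul_majorants {q r D E : ℝ} {U V : ℕ → ℝ} (hq0 : 0 < q) (hq1 : q < 1)
    (hr0 : 0 ≤ r) (hr1 : r < 1) (hU0 : ∀ n, 0 ≤ U n) (hV0 : ∀ n, 0 ≤ V n)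
    (hU : ∀ n, U (n + 1) ≤ (1 + D * q ^ (n + 1)) * U n)
    (hV : ∀ n, V (n + 1) ≤ (1 + E * q ^ (n + 1)) * V n) :
    Summable fun n => r ^ n * (U n * V n) := by
  obtain ⟨R, hrR, hR⟩ := exists_between hr1
  have hq : Filter.Tendsto (fun n : ℕ => q ^ (n + 1)) Filter.atTop (nhds 0) :=
    (tendsto_pow_atTop_nhds_zero_of_lt_one hq0.le hq1).comp (Filter.tendsto_add_atTop_nat 1)
  have hlim : Filter.Tendsto (fun n : ℕ => r * ((1 + D * q ^ (n + 1)) * (1 + E * q ^ (n + 1))))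
      Filter.atTop (nhds r) := by
    simpa using (((hq.const_mul D).const_add 1).mul ((hq.const_mul E).const_add 1)).const_mul r
  refine summable_of_ratio_norm_eventually_le hR ?_
  filter_upwards [hlim.eventually_lt_const hrR] with n hn
  have hUV : ∀ n, 0 ≤ U n * V n := fun n => mul_nonneg (hU0 n) (hV0 n)
  rw [Real.norm_of_nonneg (mul_nonneg (pow_nonneg hr0 _) (hUV _)),
    Real.norm_of_nonneg (mul_nonneg (pow_nonneg hr0 _) (hUV _))]
  have h1 := mul_le_mul (hU n) (hV n) (hV0 _) ((hU0 _).trans (hU n))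
  calc r ^ (n + 1) * (U (n + 1) * V (n + 1))
      ≤ r ^ (n + 1) * ((1 + D * q ^ (n + 1)) * U n * ((1 + E * q ^ (n + 1)) * V n)) := by gcongr
    _ = r * ((1 + D * q ^ (n + 1)) * (1 + E * q ^ (n + 1))) * (r ^ n * (U n * V n)) := by ring
    _ ≤ R * (r ^ n * (U n * V n)) :=
      mul_le_mul_of_nonneg_right hn.le (mul_nonneg (pow_nonneg hr0 _) (hUV _))

lemma summable_qWave_shift {q : ℝ} (hq0 : 0 < q) (hq1 : q < 1) {t : ℂ} (ht : ‖t‖ < 1)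
    (x y : ℝ) :
    Summable fun n : ℕ => t ^ n * ((√(qE q (n + 1)) * qWave q (n + 1) x : ℝ) : ℂ) *
      (qWave q n y : ℂ) := by
  obtain ⟨U, D, -, hU1, hU⟩ := exists_qWave_majorant hq0 hq1 x
  obtain ⟨V, E, hV0, -, hV⟩ := exists_qWave_majorant hq0 hq1 y
  have hs := (summable_pow_mul_majorants hq0 hq1 (norm_nonneg t) ht
    (fun n => (abs_nonneg _).trans (hU1 n)) (fun n => (abs_nonneg _).trans (hV0 n)) hU
    hV).mul_left (√(1 / (1 - q)))
  refine Summable.of_norm_bounded hs fun n => ?_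
  have he : √(qE q (n + 1)) ≤ √(1 / (1 - q)) :=
    Real.sqrt_le_sqrt (div_le_div_of_nonneg_right (sub_le_self _ (pow_pos hq0 _).le)
      (sub_nonneg.2 hq1.le))
  rw [norm_mul, norm_mul, norm_pow, Complex.norm_real, Complex.norm_real, Real.norm_eq_abs,
    Real.norm_eq_abs, abs_mul, abs_of_nonneg (Real.sqrt_nonneg _)]
  calc ‖t‖ ^ n * (√(qE q (n + 1)) * |qWave q (n + 1) x|) * |qWave q n y|
      ≤ ‖t‖ ^ n * (√(1 / (1 - q)) * U n) * V n := by
        have := (abs_nonneg _).trans (hU1 n)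
        gcongr
        exacts [hU1 n, hV0 n]
    _ = _ := by ring

lemma hasSum_qWave_lower {q : ℝ} (hq0 : 0 < q) (hq1 : q < 1) {t : ℂ} (ht : ‖t‖ < 1)
    (x y : ℝ) :
    HasSum (fun n : ℕ => t ^ n * ((√(qE q n) * qWave q (n - 1) x : ℝ) : ℂ) * (qWave q n y : ℂ))
      (t * ∑' n : ℕ, t ^ n * ((√(qE q (n + 1)) * qWave q (n + 1) y : ℝ) : ℂ) *
        (qWave q n x : ℂ)) := by
  rw [← hasSum_nat_add_iff' 1]
  have h0 : qE q 0 = 0 := by simp [qE]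
  simp only [Finset.sum_range_one, h0, Real.sqrt_zero, zero_mul, Complex.ofReal_zero, mul_zero,
    sub_zero]
  refine ((summable_qWave_shift hq0 hq1 ht y x).hasSum.mul_left t).congr_fun fun n => ?_
  rw [Nat.add_sub_cancel]
  push_cast
  ring

/-- Summing the recurrence in `x` against `t ^ n ψ_n(y)`. -/
lemma tsum_qWave_shift_add {q : ℝ} (hq0 : 0 < q) (hq1 : q < 1) {t : ℂ} (ht : ‖t‖ < 1)
    (x y : ℝ) :
    (∑' n : ℕ, t ^ n * ((√(qE q (n + 1)) * qWave q (n + 1) x : ℝ) : ℂ) * (qWave q n y : ℂ)) +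
      t * ∑' n : ℕ, t ^ n * ((√(qE q (n + 1)) * qWave q (n + 1) y : ℝ) : ℂ) * (qWave q n x : ℂ) =
    2 / (√(1 - q) : ℂ) * x * ∑' n : ℕ, t ^ n * (qWave q n x : ℂ) * (qWave q n y : ℂ) := by
  rw [← ((summable_qWave_shift hq0 hq1 ht x y).hasSum.add
    (hasSum_qWave_lower hq0 hq1 ht x y)).tsum_eq, ← tsum_mul_left]
  refine tsum_congr fun n => ?_
  have h : ((√(qE q (n + 1)) * qWave q (n + 1) x : ℝ) : ℂ) +
      ((√(qE q n) * qWave q (n - 1) x : ℝ) : ℂ) = 2 / (√(1 - q) : ℂ) * x * qWave q n x := by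
    exact_mod_cast qWave_recurrence hq0 hq1 n x
  linear_combination t ^ n * (qWave q n y : ℂ) * h

/-- Eigenvalue equation for the momentum operator
`P = (√(1-q)/(2i))(q^{N/2} b - b⁺ q^{N/2})`, applied termwise in `x`, on the kernel:
`P_x K_t(x,y;q) = (2ty - (1+t²)x)/(i(1-t²)) · K_t(x,y;q)`. -/
theorem qKernel_momentum_eigen (q : ℝ) (hq0 : 0 < q) (hq1 : q < 1)
    (t : ℂ) (ht : ‖t‖ < 1) (ht2 : t ^ 2 ≠ 1) (x y : ℝ) :
    (Real.sqrt (2 / (1 - q)) : ℂ) *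
      ∑' n : ℕ, t ^ n *
        ((Real.sqrt (1 - q) : ℂ) / (2 * Complex.I) *
          ((Real.sqrt (qE q n) * qWave q (n - 1) x -
            Real.sqrt (qE q (n + 1)) * qWave q (n + 1) x : ℝ) : ℂ)) *
        (qWave q n y : ℂ) =
    (2 * t * (y : ℂ) - (1 + t ^ 2) * (x : ℂ)) / (Complex.I * (1 - t ^ 2)) *
      qKernel q t x y := by
  have hA := tsum_qWave_shift_add hq0 hq1 ht x y
  have hB := tsum_qWave_shift_add hq0 hq1 ht y x
  have hswap : (∑' n : ℕ, t ^ n * (qWave q n y : ℂ) * (qWave q n x : ℂ)) =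
      ∑' n : ℕ, t ^ n * (qWave q n x : ℂ) * (qWave q n y : ℂ) :=
    tsum_congr fun n => by ring
  rw [hswap] at hB
  have hL := (((hasSum_qWave_lower hq0 hq1 ht x y).sub
    (summable_qWave_shift hq0 hq1 ht x y).hasSum).mul_left
      ((√(1 - q) : ℂ) / (2 * Complex.I))).tsum_eq
  have hr : (√(1 - q) : ℂ) ≠ 0 :=
    Complex.ofReal_ne_zero.2 (Real.sqrt_pos.2 (sub_pos.2 hq1)).ne'
  have ht' : 1 - t ^ 2 ≠ 0 := sub_ne_zero.2 ht2.symm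
  have hterm : ∀ n : ℕ, t ^ n *
        ((√(1 - q) : ℂ) / (2 * Complex.I) *
          ((√(qE q n) * qWave q (n - 1) x - √(qE q (n + 1)) * qWave q (n + 1) x : ℝ) : ℂ)) *
        (qWave q n y : ℂ) =
      (√(1 - q) : ℂ) / (2 * Complex.I) *
        (t ^ n * ((√(qE q n) * qWave q (n - 1) x : ℝ) : ℂ) * (qWave q n y : ℂ) -
          t ^ n * ((√(qE q (n + 1)) * qWave q (n + 1) x : ℝ) : ℂ) * (qWave q n y : ℂ)) := by
    intro n
    push_cast
    ring
  rw [tsum_congr hterm, hL, qKernel]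
  generalize (∑' n : ℕ, t ^ n * (qWave q n x : ℂ) * (qWave q n y : ℂ)) = S at *
  generalize (∑' n : ℕ, t ^ n * ((√(qE q (n + 1)) * qWave q (n + 1) x : ℝ) : ℂ) *
    (qWave q n y : ℂ)) = A at *
  generalize (∑' n : ℕ, t ^ n * ((√(qE q (n + 1)) * qWave q (n + 1) y : ℝ) : ℂ) *
    (qWave q n x : ℂ)) = B at *
  have hI := Complex.I_ne_zero
  field_simp at hA hB ⊢
  linear_combination (√(2 / (1 - q)) : ℂ) * (2 * t * hB - (1 + t ^ 2) * hA)
end
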